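/- arXiv:2407.17147 — 2 statements merged into one kernel-verified Lean document; each statement's English description precedes it below -/
import Mathlib

section
/- Let Q be a finite acyclic quiver, k a field, Λ a finite-dimensional k-algebra, and M a finite-dimensional left ΛQ-module. Then M lies in mono(Q,Λ) if and only if the restriction of M along the canonical algebra morphism kQ → ΛQ is a projective kQ-module. -/
/-! Basic framework: representations of a quiver over a ring. -/

namespace QuivRep

/-- A representation of a quiver `V` over a ring `Λ`. -/
structure Repn (Λ : Type) [Ring Λ] (V : Type) [Quiver.{1} V] where
  M : V → Type
  [acg : ∀ i, AddCommGroup (M i)]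
  [mod : ∀ i, Module Λ (M i)]
  h : ∀ {i j : V}, (i ⟶ j) → (M i →ₗ[Λ] M j)

attribute [instance] Repn.acg Repn.mod

variable {Λ : Type} [Ring Λ] {V : Type} [Quiver.{1} V]

/-- A morphism of representations. -/
@[ext]
structure RepHom (X Y : Repn Λ V) where
  app : ∀ i, X.M i →ₗ[Λ] Y.M i
  comm : ∀ {i j : V} (a : i ⟶ j), (Y.h a).comp (app i) = (app j).comp (X.h a)

namespace RepHom

def id (X : Repn Λ V) : RepHom X X :=
  ⟨fun _ => LinearMap.id, fun _ => rfl⟩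

def comp {X Y Z : Repn Λ V} (g : RepHom Y Z) (f : RepHom X Y) : RepHom X Z :=
  ⟨fun i => (g.app i).comp (f.app i), fun a => by
    rw [← LinearMap.comp_assoc, g.comm a, LinearMap.comp_assoc, f.comm a,
      LinearMap.comp_assoc]⟩

instance (X Y : Repn Λ V) : Zero (RepHom X Y) :=
  ⟨⟨fun _ => 0, fun a => by simp⟩⟩

end RepHom

/-- Isomorphism of representations. -/
def RepIso (X Y : Repn Λ V) : Prop :=
  ∃ (f : RepHom X Y) (g : RepHom Y X), g.comp f = RepHom.id X ∧ f.comp g = RepHom.id Y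

/-- The zero representation predicate. -/
def Repn.IsZero (X : Repn Λ V) : Prop := ∀ i, Subsingleton (X.M i)

/-- Indecomposability, via idempotent endomorphisms. -/
def Repn.Indec (X : Repn Λ V) : Prop :=
  ¬ X.IsZero ∧ ∀ e : RepHom X X, e.comp e = e → e = RepHom.id X ∨ e = 0

/-- Finitely generated (pointwise) representations. -/
def Repn.FG (X : Repn Λ V) : Prop := ∀ i, Module.Finite Λ (X.M i)

variable [Fintype V] [∀ i j : V, Fintype (i ⟶ j)]

/-- The canonical map `⊕_{α : t(α) = i} M_{s(α)} → M_i` of a representation. -/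
noncomputable def Repn.inMap (X : Repn Λ V) (i : V) :
    ((a : Σ j : V, j ⟶ i) → X.M a.1) →ₗ[Λ] X.M i :=
  ∑ a : (Σ j : V, j ⟶ i), (X.h a.2).comp (LinearMap.proj a)

/-- The (separated) monomorphism condition. -/
def Repn.IsMonoRep (X : Repn Λ V) : Prop := ∀ i : V, Function.Injective (X.inMap i)

/-- A quiver is acyclic if it has no nontrivial cycles. -/
def IsAcyclic (V : Type) [Quiver.{1} V] : Prop :=
  ∀ (i : V) (p : Quiver.Path i i), p = Quiver.Path.nil

/-- `f, g` form a short exact sequence of representations (computed vertexwise). -/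
def IsSES {X Y Z : Repn Λ V} (f : RepHom X Y) (g : RepHom Y Z) : Prop :=
  (∀ i, Function.Injective (f.app i)) ∧ (∀ i, Function.Surjective (g.app i)) ∧
    (∀ i, LinearMap.range (f.app i) = LinearMap.ker (g.app i))

end QuivRep

namespace QuivRep

/-- Categorical projectivity of a representation of `Q` over `Λ`,
i.e. projectivity as a `ΛQ`-module. -/
def RepProjective {Λ : Type} [Ring Λ] {V : Type} [Quiver.{1} V] (P : Repn Λ V) : Prop :=
  ∀ (X Y : Repn Λ V) (g : RepHom X Y), (∀ i, Function.Surjective (g.app i)) →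
    ∀ f : RepHom P Y, ∃ l : RepHom P X, g.comp l = f

/-- Restriction of a representation of `Q` over `Λ` along the canonical algebra morphism
`kQ → ΛQ`; concretely, each vertex module is viewed as a `k`-module via `algebraMap k Λ`
and each structure map as a `k`-linear map. -/
noncomputable def restrictRep (k : Type) [CommRing k] {Λ : Type} [Ring Λ] [Algebra k Λ]
    {V : Type} [Quiver.{1} V] (X : Repn Λ V) : Repn k V :=
  Repn.mk (M := X.M) (acg := X.acg)
    (mod := fun i => Module.compHom (X.M i) (algebraMap k Λ))
    (h := fun {i j} a =>
      letI : Module k (X.M i) := Module.compHom (X.M i) (algebraMap k Λ)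
      letI : Module k (X.M j) := Module.compHom (X.M j) (algebraMap k Λ)
      { toFun := X.h a
        map_add' := fun x y => map_add _ x y
        map_smul' := fun r x => (X.h a).map_smul (algebraMap k Λ r) x })

end QuivRep

namespace QuivRep

theorem inMap_apply' {Λ : Type} [Ring Λ] {V : Type} [Quiver.{1} V] [Fintype V]
    [∀ i j : V, Fintype (i ⟶ j)] (X : Repn Λ V) (i : V)
    (x : (a : Σ j : V, j ⟶ i) → X.M a.1) :
    X.inMap i x = ∑ a : (Σ j : V, j ⟶ i), X.h a.2 (x a) := by
  simp [Repn.inMap]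

open Classical in
theorem inMap_single {Λ : Type} [Ring Λ] {V : Type} [Quiver.{1} V] [Fintype V]
    [∀ i j : V, Fintype (i ⟶ j)] (X : Repn Λ V) (i : V)
    (a : Σ j : V, j ⟶ i) (x : X.M a.1) :
    X.inMap i (Pi.single a x) = X.h a.2 x := by
  rw [inMap_apply', Finset.sum_eq_single a]
  · simp
  · intro b _ hb
    simp [Pi.single_eq_of_ne hb]
  · simp

open Classical in
/-- The test representation used to show that projectives are mono. -/
noncomputable def testRep {Λ : Type} [Ring Λ] {V : Type} [Quiver.{1} V] [Fintype V]
    [∀ i j : V, Fintype (i ⟶ j)] (P : Repn Λ V) : Repn Λ V where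
  M v := P.M v × Shrink.{0} ((a : Σ j : V, j ⟶ v) → P.M a.1)
  h {v w} b := LinearMap.prod ((P.h b).comp (LinearMap.fst _ _ _))
    ((Shrink.linearEquiv Λ ((a : Σ j : V, j ⟶ w) → P.M a.1)).symm.toLinearMap.comp
      ((LinearMap.single Λ (fun a : (Σ j : V, j ⟶ w) => P.M a.1) ⟨v, b⟩).comp
        (LinearMap.fst _ _ _)))

/-- First projection from the test representation. -/
noncomputable def testFst {Λ : Type} [Ring Λ] {V : Type} [Quiver.{1} V] [Fintype V]
    [∀ i j : V, Fintype (i ⟶ j)] (P : Repn Λ V) (v : V) :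
    (testRep P).M v →ₗ[Λ] P.M v :=
  LinearMap.fst Λ (P.M v) (Shrink.{0} ((a : Σ j : V, j ⟶ v) → P.M a.1))

/-- Second projection from the test representation. -/
noncomputable def testSnd {Λ : Type} [Ring Λ] {V : Type} [Quiver.{1} V] [Fintype V]
    [∀ i j : V, Fintype (i ⟶ j)] (P : Repn Λ V) (v : V) :
    (testRep P).M v →ₗ[Λ] ((a : Σ j : V, j ⟶ v) → P.M a.1) :=
  (Shrink.linearEquiv Λ ((a : Σ j : V, j ⟶ v) → P.M a.1)).toLinearMap.comp
    (LinearMap.snd Λ (P.M v) (Shrink.{0} ((a : Σ j : V, j ⟶ v) → P.M a.1)))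

/-- Projection from the test representation. -/
noncomputable def testHom {Λ : Type} [Ring Λ] {V : Type} [Quiver.{1} V] [Fintype V]
    [∀ i j : V, Fintype (i ⟶ j)] (P : Repn Λ V) : RepHom (testRep P) P where
  app v := testFst P v
  comm a := rfl

open Classical in
theorem testSnd_h {Λ : Type} [Ring Λ] {V : Type} [Quiver.{1} V] [Fintype V]
    [∀ i j : V, Fintype (i ⟶ j)] (P : Repn Λ V) (w : V) (b : Σ j : V, j ⟶ w)
    (y : (testRep P).M b.1) :
    testSnd P w ((testRep P).h b.2 y) =
      LinearMap.single Λ (fun a : (Σ j : V, j ⟶ w) => P.M a.1) b (testFst P b.1 y) :=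
  (Shrink.linearEquiv Λ ((a : Σ j : V, j ⟶ w) → P.M a.1)).apply_symm_apply _

theorem mono_of_projective {Λ : Type} [Ring Λ] {V : Type} [Quiver.{1} V] [Fintype V]
    [∀ i j : V, Fintype (i ⟶ j)] (P : Repn Λ V) (hP : RepProjective P) : P.IsMonoRep := by
  classical
  obtain ⟨l, hl⟩ := hP (testRep P) P (testHom P) (fun i => Prod.fst_surjective) (RepHom.id P)
  have h1 : ∀ v (p : P.M v), testFst P v (l.app v p) = p := fun v p =>
    congrArg (fun f : RepHom P P => f.app v p) hl
  have h2 : ∀ w (b : Σ j : V, j ⟶ w) (p : P.M b.1),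
      testSnd P w (l.app w (P.h b.2 p)) =
        LinearMap.single Λ (fun a : (Σ j : V, j ⟶ w) => P.M a.1) b p := by
    intro w b p
    have h3 : (testRep P).h b.2 (l.app b.1 p) = l.app w (P.h b.2 p) :=
      LinearMap.congr_fun (l.comm b.2) p
    rw [← h3, testSnd_h, h1]
  intro i
  rw [injective_iff_map_eq_zero]
  intro x hx
  have key : testSnd P i (l.app i (P.inMap i x)) = x := by
    rw [inMap_apply', map_sum, map_sum]
    refine (Finset.sum_congr rfl fun a _ => h2 i a (x a)).trans ?_
    exact Finset.univ_sum_single x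
  rw [← key, hx, map_zero, map_zero]

theorem wf_of_acyclic {V : Type} [Quiver.{1} V] [Fintype V] (hacyc : IsAcyclic V) :
    WellFounded (fun j i : V => Nonempty (j ⟶ i)) := by
  have hpath : ∀ i j : V, Relation.TransGen (fun j i : V => Nonempty (j ⟶ i)) i j →
      ∃ p : Quiver.Path i j, p.length ≠ 0 := by
    intro i j h
    induction h with
    | single h => exact ⟨Quiver.Path.nil.cons h.some, by simp⟩
    | tail _ h ih => exact ⟨ih.choose.cons h.some, by simp⟩
  have : Std.Irrefl (Relation.TransGen (fun j i : V => Nonempty (j ⟶ i))) :=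
    ⟨fun i h => by
      obtain ⟨p, hp⟩ := hpath i i h
      rw [hacyc i p] at hp
      exact hp rfl⟩
  have hwf := Finite.wellFounded_of_trans_of_irrefl
    (Relation.TransGen (fun j i : V => Nonempty (j ⟶ i)))
  exact Subrelation.wf (fun h => Relation.TransGen.single h) hwf

theorem projective_of_mono {k : Type} [Field k] {V : Type} [Quiver.{1} V] [Fintype V]
    [∀ i j : V, Fintype (i ⟶ j)] (hacyc : IsAcyclic V) (P : Repn k V)
    (hP : P.IsMonoRep) : RepProjective P := by
  classical
  intro A B g hg f
  have hr : ∀ i, ∃ r, r ∘ₗ P.inMap i = LinearMap.id := fun i =>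
    LinearMap.exists_leftInverse_of_injective _ (LinearMap.ker_eq_bot.2 (hP i))
  choose r hr using hr
  have hs : ∀ i, ∃ s, g.app i ∘ₗ s = LinearMap.id := fun i =>
    LinearMap.exists_rightInverse_of_surjective _ (LinearMap.range_eq_top.2 (hg i))
  choose s hs using hs
  have wf := wf_of_acyclic hacyc
  let F : ∀ i, (∀ j, Nonempty (j ⟶ i) → (P.M j →ₗ[k] A.M j)) → (P.M i →ₗ[k] A.M i) :=
    fun i L => A.inMap i ∘ₗ
        LinearMap.pi (fun a => (L a.1 ⟨a.2⟩) ∘ₗ LinearMap.proj a) ∘ₗ r i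
      + s i ∘ₗ f.app i ∘ₗ (LinearMap.id - P.inMap i ∘ₗ r i)
  let l : ∀ i, P.M i →ₗ[k] A.M i := wf.fix F
  have hl : ∀ i x, l i x = A.inMap i (fun a => l a.1 (r i x a))
      + s i (f.app i (x - P.inMap i (r i x))) := by
    intro i x
    have : l i = F i (fun j _ => l j) := wf.fix_eq F i
    rw [this]
    rfl
  have hr' : ∀ i x, r i (P.inMap i x) = x := fun i x => LinearMap.congr_fun (hr i) x
  have hs' : ∀ i x, g.app i (s i x) = x := fun i x => LinearMap.congr_fun (hs i) x
  have hgc : ∀ {i j : V} (a : i ⟶ j) x, B.h a (g.app i x) = g.app j (A.h a x) :=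
    fun a x => LinearMap.congr_fun (g.comm a) x
  have hfc : ∀ {i j : V} (a : i ⟶ j) x, B.h a (f.app i x) = f.app j (P.h a x) :=
    fun a x => LinearMap.congr_fun (f.comm a) x
  refine ⟨⟨l, ?_⟩, ?_⟩
  · intro j i a
    ext x
    have e : P.h a x = P.inMap i (Pi.single (⟨j, a⟩ : Σ j : V, j ⟶ i) x) :=
      (inMap_single P i ⟨j, a⟩ x).symm
    change A.h a (l j x) = l i (P.h a x)
    rw [hl i, e, hr', sub_self, map_zero, map_zero, add_zero,
      ← inMap_single A i ⟨j, a⟩ (l j x)]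
    congr 1
    funext b
    exact (Pi.apply_single (fun (b : Σ j : V, j ⟶ i) => l b.1) (fun _ => map_zero _)
      ⟨j, a⟩ x b).symm
  · have main : ∀ i x, g.app i (l i x) = f.app i x := by
      intro i
      induction i using wf.induction with
      | _ i ih =>
        intro x
        rw [hl, map_add, hs', inMap_apply', map_sum, map_sub]
        simp_rw [← hgc]
        rw [Finset.sum_congr rfl (fun a _ => by rw [ih a.1 ⟨a.2⟩, hfc]),
          ← map_sum, ← inMap_apply']
        abel
    apply RepHom.ext
    funext i
    ext x
    exact main i x

end QuivRep

open QuivRep in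
/-- Let `Q` be a finite acyclic quiver, `k` a field, `Λ` a
finite-dimensional `k`-algebra and `M` a finite-dimensional left `ΛQ`-module.  Then `M`
lies in `mono(Q,Λ)` if and only if the restriction of `M` along the canonical algebra
morphism `kQ → ΛQ` is a projective `kQ`-module. -/
theorem mono_iff_restriction_projective
    (V : Type) [Quiver.{1} V] [Fintype V] [∀ i j : V, Fintype (i ⟶ j)]
    (hacyc : IsAcyclic V)
    (k : Type) [Field k] (Λ : Type) [Ring Λ] [Algebra k Λ] [Module.Finite k Λ]
    (X : Repn Λ V) (hX : X.FG) :
    X.IsMonoRep ↔ RepProjective (restrictRep k X) := by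
  have h : X.IsMonoRep ↔ (restrictRep k X).IsMonoRep := by
    refine forall_congr' fun i => ?_
    have e : ∀ x : ((a : Σ j : V, j ⟶ i) → X.M a.1),
        X.inMap i x = (restrictRep k X).inMap i x := fun x =>
      (inMap_apply' X i x).trans (inMap_apply' (restrictRep k X) i x).symm
    have e' : (X.inMap i : _ → _) = ((restrictRep k X).inMap i : _ → _) := funext e
    exact iff_of_eq (congrArg Function.Injective e')
  exact h.trans ⟨projective_of_mono hacyc _, mono_of_projective _⟩
end

section
/- The category V_p^n of p-valuated abelian groups with valuation bounded by n−1 is quasi-abelian. Furthermore: (1) a morphism φ: B → B′ in V_p^n is a kernel if and only if φ is injective and v(φ(x)) = v(x) for all x ∈ B, if and only if φ is injective and the square with vertices B(i), B′(i), B(0), B′(0) is a pullback for each 0 ≤ i ≤ n; (2) φ is a cokernel if and only if φ is surjective and every x′ ∈ B′ has a preimage x with v(x) = v(x′), if and only if φ(i): B(i) → B′(i) is surjective for each 0 ≤ i ≤ n; (3) a sequence B → B′ → B″ in V_p^n is a kernel-cokernel pair if and only if 0 → B(i) → B′(i) → B″(i) → 0 is a short exact sequence of abelian groups for all 0 ≤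 i ≤ n. -/
namespace PVal

/-- A `p`-valuated abelian group whose nonzero elements have value at most `n-1`:
an object of the category `𝒱ₚⁿ`. -/
structure ValGroup (p n : ℕ) where
  B : Type
  [acg : AddCommGroup B]
  v : B → ℕ∞
  add_le : ∀ x y : B, min (v x) (v y) ≤ v (x + y)
  smul_lt : ∀ x : B, v x < v (p • x) ∨ (v x = ⊤ ∧ v (p • x) = ⊤)
  bounded : ∀ x : B, x ≠ 0 → v x ≤ ((n - 1 : ℕ) : ℕ∞)

attribute [instance] ValGroup.acg

/-- A morphism of `p`-valuated abelian groups. -/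
@[ext]
structure ValHom {p n : ℕ} (A B : ValGroup p n) where
  f : A.B →+ B.B
  le : ∀ x, A.v x ≤ B.v (f x)

theorem ValGroup.v_zero {p n : ℕ} (A : ValGroup p n) : A.v 0 = ⊤ := by
  rcases A.smul_lt 0 with h | h
  · rw [smul_zero] at h
    exact absurd h (lt_irrefl _)
  · exact h.1

namespace ValHom

variable {p n : ℕ} {A B C D : ValGroup p n}

def id (A : ValGroup p n) : ValHom A A :=
  ⟨AddMonoidHom.id A.B, fun _ => le_rfl⟩

def comp (g : ValHom B C) (f : ValHom A B) : ValHom A C :=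
  ⟨g.f.comp f.f, fun x => (f.le x).trans (g.le (f.f x))⟩

instance : Zero (ValHom A B) :=
  ⟨⟨0, fun x => by simp [ValGroup.v_zero]⟩⟩

end ValHom

variable {p n : ℕ}

/-- `ι` is a kernel of `ψ`. -/
def IsKernelOf {K A B : ValGroup p n} (ι : ValHom K A) (ψ : ValHom A B) : Prop :=
  ψ.comp ι = 0 ∧
    ∀ (C : ValGroup p n) (ρ : ValHom C A), ψ.comp ρ = 0 →
      ∃! σ : ValHom C K, ι.comp σ = ρ

/-- `π` is a cokernel of `ψ`. -/
def IsCokernelOf {A B Q : ValGroup p n} (π : ValHom B Q) (ψ : ValHom A B) : Prop :=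
  π.comp ψ = 0 ∧
    ∀ (C : ValGroup p n) (ρ : ValHom B C), ρ.comp ψ = 0 →
      ∃! σ : ValHom Q C, σ.comp π = ρ

/-- A morphism which occurs as a kernel. -/
def IsKernelMor {A B : ValGroup p n} (φ : ValHom A B) : Prop :=
  ∃ (C : ValGroup p n) (ψ : ValHom B C), IsKernelOf φ ψ

/-- A morphism which occurs as a cokernel. -/
def IsCokernelMor {A B : ValGroup p n} (φ : ValHom A B) : Prop :=
  ∃ (C : ValGroup p n) (ψ : ValHom C A), IsCokernelOf φ ψ

/-- A kernel–cokernel pair (conflation). -/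
def IsConflation {A B C : ValGroup p n} (φ : ValHom A B) (ψ : ValHom B C) : Prop :=
  IsKernelOf φ ψ ∧ IsCokernelOf ψ φ

end PVal

namespace PVal

section Helpers

variable {p n : ℕ}

theorem hom_ext {A B : ValGroup p n} {φ ψ : ValHom A B} (h : ∀ x, φ.f x = ψ.f x) : φ = ψ :=
  ValHom.ext (AddMonoidHom.ext h)

theorem comp_apply {A B C : ValGroup p n} (g : ValHom B C) (f : ValHom A B) (x : A.B) :
    (g.comp f).f x = g.f (f.f x) := rfl

theorem zero_apply {A B : ValGroup p n} (x : A.B) : (0 : ValHom A B).f x = 0 := rfl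

theorem app_eq {A B : ValGroup p n} {φ ψ : ValHom A B} (h : φ = ψ) (x : A.B) :
    φ.f x = ψ.f x := by rw [h]

theorem eq_zero_of_v {A : ValGroup p n} {x : A.B} (h : A.v x = ⊤) : x = 0 := by
  by_contra hx
  have := A.bounded x hx
  rw [h, top_le_iff] at this
  exact ENat.natCast_ne_top _ this

theorem le_nsmul (A : ValGroup p n) (x : A.B) (k : ℕ) : A.v x ≤ A.v (k • x) := by
  induction k with
  | zero => simp [A.v_zero]
  | succ k ih =>
    rw [succ_nsmul]
    exact le_trans (le_min ih le_rfl) (A.add_le _ _)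

theorem le_pow_smul (A : ValGroup p n) (x : A.B) (k : ℕ) : (k : ℕ∞) ≤ A.v (p ^ k • x) := by
  induction k with
  | zero => simp
  | succ k ih =>
    rw [pow_succ', mul_smul]
    rcases A.smul_lt (p ^ k • x) with h | h
    · have := lt_of_le_of_lt ih h
      push_cast
      exact Order.add_one_le_of_lt this
    · rw [h.2]; exact le_top

theorem pow_smul_eq_zero (A : ValGroup p n) (hn : 1 ≤ n) (x : A.B) : p ^ n • x = 0 := by
  by_contra hx
  have h1 := A.bounded _ hx
  have h2 := (le_pow_smul A x n).trans h1
  have : n ≤ n - 1 := by exact_mod_cast h2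
  omega

theorem le_neg (A : ValGroup p n) (hp : p.Prime) (hn : 1 ≤ n) (x : A.B) :
    A.v x ≤ A.v (-x) := by
  have h : -x = (p ^ n - 1) • x := by
    have h1 : 1 ≤ p ^ n := Nat.one_le_pow _ _ hp.pos
    have h2 : (p ^ n - 1) • x + x = 0 := by
      rw [← succ_nsmul, Nat.sub_add_cancel h1]
      exact pow_smul_eq_zero A hn x
    exact (eq_neg_of_add_eq_zero_left h2).symm
  rw [h]
  exact le_nsmul A x _

theorem exists_max (A : ValGroup p n) (N : AddSubgroup A.B) (y : A.B ⧸ N) :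
    ∃ x : A.B, (QuotientAddGroup.mk' N x) = y ∧
      ∀ x', (QuotientAddGroup.mk' N x') = y → A.v x' ≤ A.v x := by
  by_cases hy : y = 0
  · exact ⟨0, by simp [hy], fun x' _ => by rw [A.v_zero]; exact le_top⟩
  · have hne : ∀ x', (QuotientAddGroup.mk' N x') = y → A.v x' ≤ ((n - 1 : ℕ) : ℕ∞) := by
      intro x' hx'
      apply A.bounded
      rintro rfl
      exact hy (by rw [← hx', map_zero])
    obtain ⟨x0, hx0⟩ := QuotientAddGroup.mk'_surjective N y
    have hS : (A.v '' {x | (QuotientAddGroup.mk' N x) = y}).Finite := by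
      apply Set.Finite.subset (Set.Finite.image (fun k : ℕ => (k : ℕ∞)) (Set.finite_Iic (n - 1)))
      rintro _ ⟨x', hx', rfl⟩
      have h := hne x' hx'
      obtain ⟨k, hk⟩ := ENat.ne_top_iff_exists.mp (ne_top_of_le_ne_top (ENat.natCast_ne_top _) h)
      rw [← hk] at h ⊢
      exact ⟨k, by exact_mod_cast h, rfl⟩
    obtain ⟨_, ⟨x, hx, rfl⟩, hmax⟩ := Set.exists_max_image _ (fun t : ℕ∞ => t) hS
      ⟨_, x0, hx0, rfl⟩
    exact ⟨x, hx, fun x' hx' => hmax _ ⟨x', hx', rfl⟩⟩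

noncomputable def rep (A : ValGroup p n) (N : AddSubgroup A.B) (y : A.B ⧸ N) : A.B :=
  (exists_max A N y).choose

theorem rep_mk (A : ValGroup p n) (N : AddSubgroup A.B) (y : A.B ⧸ N) :
    QuotientAddGroup.mk' N (rep A N y) = y := (exists_max A N y).choose_spec.1

theorem le_rep (A : ValGroup p n) (N : AddSubgroup A.B) (y : A.B ⧸ N) (x : A.B)
    (hx : QuotientAddGroup.mk' N x = y) : A.v x ≤ A.v (rep A N y) :=
  (exists_max A N y).choose_spec.2 x hx

/-- The quotient of a valuated group with the quotient valuation. -/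
noncomputable def quot (A : ValGroup p n) (N : AddSubgroup A.B) : ValGroup p n where
  B := A.B ⧸ N
  v y := A.v (rep A N y)
  add_le x y := (A.add_le _ _).trans (le_rep A N _ _ (by rw [map_add, rep_mk, rep_mk]))
  smul_lt x := by
    have h := le_rep A N (p • x) (p • rep A N x) (by rw [map_nsmul, rep_mk])
    rcases A.smul_lt (rep A N x) with h1 | h1
    · exact Or.inl (h1.trans_le h)
    · exact Or.inr ⟨h1.1, top_le_iff.mp (h1.2 ▸ h)⟩
  bounded x hx := A.bounded _ (by
    intro h
    apply hx
    rw [← rep_mk A N x, h, map_zero])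

/-- The quotient map. -/
noncomputable def quotMap (A : ValGroup p n) (N : AddSubgroup A.B) : ValHom A (quot A N) where
  f := QuotientAddGroup.mk' N
  le x := le_rep A N _ x rfl

theorem quotMap_eq_zero (A : ValGroup p n) (N : AddSubgroup A.B) (x : A.B) :
    (quotMap A N).f x = 0 ↔ x ∈ N := QuotientAddGroup.eq_zero_iff x

theorem quotMap_lift (A : ValGroup p n) (N : AddSubgroup A.B) (y : (quot A N).B) :
    ∃ x, (quotMap A N).f x = y ∧ A.v x = (quot A N).v y := ⟨rep A N y, rep_mk A N y, rfl⟩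

/-- A subgroup with the restricted valuation. -/
def sub (A : ValGroup p n) (N : AddSubgroup A.B) : ValGroup p n where
  B := N
  v x := A.v x
  add_le x y := A.add_le x y
  smul_lt x := A.smul_lt x
  bounded x hx := A.bounded x (by simpa using hx)

/-- The inclusion of a subgroup. -/
def subMap (A : ValGroup p n) (N : AddSubgroup A.B) : ValHom (sub A N) A where
  f := N.subtype
  le _ := le_rfl

/-- The product of two valuated groups. -/
noncomputable def prod (A B : ValGroup p n) : ValGroup p n where
  B := A.B × B.B
  v x := min (A.v x.1) (B.v x.2)
  add_le x y := by
    have h1 := A.add_le x.1 y.1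
    have h2 := B.add_le x.2 y.2
    refine le_min (le_trans ?_ h1) (le_trans ?_ h2)
    · exact min_le_min (min_le_left _ _) (min_le_left _ _)
    · exact min_le_min (min_le_right _ _) (min_le_right _ _)
  smul_lt x := by
    have h1 := A.smul_lt x.1
    have h2 := B.smul_lt x.2
    simp only [Prod.smul_fst, Prod.smul_snd]
    rcases h1 with h1 | ⟨h1, h1'⟩ <;> rcases h2 with h2 | ⟨h2, h2'⟩
    · exact Or.inl (min_lt_min h1 h2)
    · left; simpa [h2, h2'] using h1
    · left; simpa [h1, h1'] using h2
    · right; simp [h1, h1', h2, h2']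
  bounded x hx := by
    by_cases h : x.1 = 0
    · exact (min_le_right _ _).trans (B.bounded _ (fun h2 => hx (Prod.ext h h2)))
    · exact (min_le_left _ _).trans (A.bounded _ h)

theorem isKernelOf_of {A B C : ValGroup p n} (φ : ValHom A B) (ψ : ValHom B C)
    (hi : Function.Injective φ.f) (hv : ∀ x, B.v (φ.f x) = A.v x)
    (hk : ∀ y, ψ.f y = 0 ↔ ∃ x, φ.f x = y) : IsKernelOf φ ψ := by
  refine ⟨hom_ext fun x => (hk _).2 ⟨x, rfl⟩, fun D ρ hρ => ?_⟩
  have h : ∀ d, ∃ x, φ.f x = ρ.f d := fun d => (hk _).1 (app_eq hρ d)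
  choose s hs using h
  refine ⟨⟨⟨⟨s, hi (by rw [hs, map_zero, map_zero])⟩, fun x y => hi ?_⟩, fun x => ?_⟩, ?_, ?_⟩
  · change φ.f (s (x + y)) = φ.f (s x + s y)
    rw [map_add, hs, hs, hs, map_add]
  · change D.v x ≤ A.v (s x)
    rw [← hv, hs]
    exact ρ.le x
  · exact hom_ext hs
  · intro σ hσ
    exact hom_ext fun x => hi ((app_eq hσ x).trans (hs x).symm)

theorem isCokernelOf_of {A B C : ValGroup p n} (φ : ValHom A B) (ψ : ValHom B C)
    (hs : ∀ y, ∃ x, ψ.f x = y ∧ B.v x = C.v y)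
    (hk : ∀ y, ψ.f y = 0 ↔ ∃ x, φ.f x = y) : IsCokernelOf ψ φ := by
  refine ⟨hom_ext fun x => (hk _).2 ⟨x, rfl⟩, fun D ρ hρ => ?_⟩
  choose s hs hv using hs
  have key : ∀ x y, ψ.f x = ψ.f y → ρ.f x = ρ.f y := by
    intro x y h
    obtain ⟨a, ha⟩ := (hk (x - y)).1 (by rw [map_sub, h, sub_self])
    have := app_eq hρ a
    rw [comp_apply, ha, map_sub, zero_apply] at this
    exact sub_eq_zero.mp this
  refine ⟨⟨⟨⟨fun q => ρ.f (s q), ?_⟩, fun x y => ?_⟩, fun x => ?_⟩, ?_, ?_⟩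
  · rw [key (s 0) 0 (by rw [hs, map_zero]), map_zero]
  · change ρ.f (s (x + y)) = ρ.f (s x) + ρ.f (s y)
    rw [← map_add]
    exact key _ _ (by rw [map_add, hs, hs, hs])
  · change C.v x ≤ D.v (ρ.f (s x))
    rw [← hv]
    exact ρ.le _
  · exact hom_ext fun x => key _ _ (hs _)
  · intro σ hσ
    refine hom_ext fun x => ?_
    change σ.f x = ρ.f (s x)
    rw [← app_eq hσ, comp_apply, hs]

theorem subMap_isKernelOf {B C : ValGroup p n} (ψ : ValHom B C) :
    IsKernelOf (subMap B ψ.f.ker) ψ := by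
  refine isKernelOf_of _ _ Subtype.val_injective (fun _ => rfl) fun y => ?_
  exact ⟨fun h => ⟨⟨y, h⟩, rfl⟩, fun ⟨x, hx⟩ => hx ▸ x.2⟩

theorem quotMap_isCokernelOf {A B : ValGroup p n} (φ : ValHom A B) :
    IsCokernelOf (quotMap B φ.f.range) φ :=
  isCokernelOf_of _ _ (quotMap_lift _ _) fun y => quotMap_eq_zero _ _ y

theorem isKernelOf_iff {A B C : ValGroup p n} (φ : ValHom A B) (ψ : ValHom B C) :
    IsKernelOf φ ψ ↔ (Function.Injective φ.f ∧ ∀ x, B.v (φ.f x) = A.v x) ∧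
      ∀ y, ψ.f y = 0 ↔ ∃ x, φ.f x = y := by
  refine ⟨fun h => ?_, fun h => isKernelOf_of φ ψ h.1.1 h.1.2 h.2⟩
  have hK := subMap_isKernelOf ψ
  obtain ⟨σ, hσ, -⟩ := h.2 _ _ hK.1
  obtain ⟨τ, hτ, -⟩ := hK.2 _ _ h.1
  have hid : ∀ x, σ.f (τ.f x) = x := by
    have : σ.comp τ = ValHom.id A := by
      refine (h.2 _ φ h.1).unique (hom_ext fun x => ?_) (hom_ext fun x => rfl)
      exact (app_eq hσ _).trans (app_eq hτ x)
    exact fun x => app_eq this x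
  refine ⟨⟨fun x y hxy => ?_, fun x => le_antisymm ?_ (φ.le x)⟩, fun y => ⟨fun hy => ?_, ?_⟩⟩
  · rw [← hid x, ← hid y]
    congr 1
    apply Subtype.val_injective
    exact (app_eq hτ x).trans (hxy.trans (app_eq hτ y).symm)
  · have h1 := σ.le (τ.f x)
    rw [hid] at h1
    rw [← app_eq hτ x]
    exact h1
  · exact ⟨_, app_eq hσ ⟨y, hy⟩⟩
  · rintro ⟨x, rfl⟩
    exact app_eq h.1 x

theorem isCokernelOf_iff {A B C : ValGroup p n} (φ : ValHom A B) (ψ : ValHom B C) :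
    IsCokernelOf ψ φ ↔ (∀ y, ∃ x, ψ.f x = y ∧ B.v x = C.v y) ∧
      ∀ y, ψ.f y = 0 ↔ ∃ x, φ.f x = y := by
  refine ⟨fun h => ?_, fun h => isCokernelOf_of φ ψ h.1 h.2⟩
  have hK := quotMap_isCokernelOf φ
  obtain ⟨σ, hσ, -⟩ := h.2 _ _ hK.1
  obtain ⟨τ, hτ, -⟩ := hK.2 _ _ h.1
  have hid : ∀ x, τ.f (σ.f x) = x := by
    have : τ.comp σ = ValHom.id C := by
      refine (h.2 _ ψ h.1).unique (hom_ext fun x => ?_) (hom_ext fun x => rfl)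
      have := app_eq hσ x
      rw [comp_apply] at this
      rw [comp_apply, comp_apply, this]
      exact app_eq hτ x
    exact fun x => app_eq this x
  refine ⟨fun y => ?_, fun y => ⟨fun hy => ?_, ?_⟩⟩
  · obtain ⟨b, hb, hv⟩ := quotMap_lift B φ.f.range (σ.f y)
    have hb' : ψ.f b = y := by
      rw [← app_eq hτ, comp_apply, hb, hid]
    refine ⟨b, hb', le_antisymm ?_ ?_⟩
    · rw [← hb']; exact ψ.le b
    · rw [hv]; exact σ.le y
  · have := app_eq hσ y
    rw [comp_apply, hy, map_zero] at this
    exact (quotMap_eq_zero _ _ y).1 this.symm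
  · rintro ⟨x, rfl⟩
    exact app_eq h.1 x

theorem isKernelMor_iff {A B : ValGroup p n} (φ : ValHom A B) :
    IsKernelMor φ ↔ (Function.Injective φ.f ∧ ∀ x, B.v (φ.f x) = A.v x) := by
  constructor
  · rintro ⟨C, ψ, h⟩
    exact ((isKernelOf_iff φ ψ).1 h).1
  · intro h
    exact ⟨_, quotMap B φ.f.range, isKernelOf_of _ _ h.1 h.2 fun y => quotMap_eq_zero _ _ y⟩

theorem isCokernelMor_iff {A B : ValGroup p n} (φ : ValHom A B) :
    IsCokernelMor φ ↔ ∀ y, ∃ x, φ.f x = y ∧ A.v x = B.v y := by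
  constructor
  · rintro ⟨C, ψ, h⟩
    exact ((isCokernelOf_iff ψ φ).1 h).1
  · intro h
    refine ⟨_, subMap A φ.f.ker, isCokernelOf_of _ _ h fun y => ?_⟩
    exact ⟨fun h => ⟨⟨y, h⟩, rfl⟩, fun ⟨x, hx⟩ => hx ▸ x.2⟩

theorem v_le_of {A : ValGroup p n} (hn : 1 ≤ n) (x : A.B) (a : ℕ∞)
    (h : ∀ i : ℕ, i ≤ n → (i : ℕ∞) ≤ a → (i : ℕ∞) ≤ A.v x) : a ≤ A.v x := by
  by_cases hx : x = 0
  · rw [hx, A.v_zero]; exact le_top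
  · have hb := A.bounded x hx
    obtain ⟨k, hk⟩ := ENat.ne_top_iff_exists.mp (ne_top_of_le_ne_top (ENat.natCast_ne_top _) hb)
    rw [← hk] at h hb ⊢
    have hkn : k ≤ n - 1 := by exact_mod_cast hb
    by_contra hlt
    have h1 := h (k + 1) (by omega) (by
      push_cast
      exact Order.add_one_le_of_lt (not_le.mp hlt))
    have : k + 1 ≤ k := by exact_mod_cast h1
    omega

theorem lift_iff {A B : ValGroup p n} (φ : ValHom A B) :
    (∀ y, ∃ x, φ.f x = y ∧ A.v x = B.v y) ↔
      ∀ i : ℕ, i ≤ n → ∀ y, (i : ℕ∞) ≤ B.v y → ∃ x, φ.f x = y ∧ (i : ℕ∞) ≤ A.v x := by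
  constructor
  · intro h i _ y hy
    obtain ⟨x, hx, hv⟩ := h y
    exact ⟨x, hx, hv ▸ hy⟩
  · intro h y
    by_cases hy : y = 0
    · exact ⟨0, by rw [map_zero, hy], by rw [hy, A.v_zero, B.v_zero]⟩
    · have hb := B.bounded y hy
      obtain ⟨k, hk⟩ := ENat.ne_top_iff_exists.mp (ne_top_of_le_ne_top (ENat.natCast_ne_top _) hb)
      have hkn : k ≤ n - 1 := by rw [← hk] at hb; exact_mod_cast hb
      obtain ⟨x, hx, hv⟩ := h k (by omega) y hk.le
      refine ⟨x, hx, le_antisymm ?_ (hk ▸ hv)⟩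
      rw [← hx]; exact φ.le x

theorem pushout (hp : p.Prime) (hn : 1 ≤ n) (A B C : ValGroup p n) (ι : ValHom A B)
    (hι : IsKernelMor ι) (f : ValHom A C) :
    ∃ (P : ValGroup p n) (ι' : ValHom C P) (f' : ValHom B P),
      ι'.comp f = f'.comp ι ∧ IsKernelMor ι' ∧
      (∀ (D : ValGroup p n) (u : ValHom C D) (w : ValHom B D), u.comp f = w.comp ι →
        ∃! t : ValHom P D, t.comp ι' = u ∧ t.comp f' = w) := by
  rw [isKernelMor_iff] at hι
  let δ : ValHom A (prod B C) := ⟨ι.f.prod (-f.f), fun x =>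
    le_min (ι.le x) ((f.le x).trans (le_neg C hp hn _))⟩
  let P := quot (prod B C) δ.f.range
  let π : ValHom (prod B C) P := quotMap (prod B C) δ.f.range
  have hπ : IsCokernelOf π δ := quotMap_isCokernelOf δ
  let inl : ValHom B (prod B C) := ⟨AddMonoidHom.inl B.B C.B, fun x =>
    le_min le_rfl (by change _ ≤ C.v 0; rw [C.v_zero]; exact le_top)⟩
  let inr : ValHom C (prod B C) := ⟨AddMonoidHom.inr B.B C.B, fun x =>
    le_min (by change _ ≤ B.v 0; rw [B.v_zero]; exact le_top) le_rfl⟩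
  have hv : ∀ c, P.v (π.f (inr.f c)) = C.v c := by
    intro c
    refine le_antisymm ?_ ((π.comp inr).le c)
    obtain ⟨x, hx, hxv⟩ := quotMap_lift (prod B C) δ.f.range (π.f (inr.f c))
    have h1 : x - inr.f c ∈ δ.f.range := by
      rw [← quotMap_eq_zero, map_sub, hx]
      exact sub_self _
    obtain ⟨a, ha⟩ := h1
    have e1 : ι.f a = x.1 := by
      have := congrArg Prod.fst ha
      exact this.trans (sub_zero x.1)
    have e2 : -f.f a = x.2 - c := congrArg Prod.snd ha
    have e3 : c = x.2 + f.f a := by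
      rw [← neg_neg (f.f a), e2]; abel
    change (quot (prod B C) δ.f.range).v _ ≤ _
    rw [← hxv]
    change min (B.v x.1) (C.v x.2) ≤ C.v c
    rw [e3, ← e1, hι.2, min_comm]
    exact (min_le_min le_rfl (f.le a)).trans (C.add_le _ _)
  refine ⟨P, π.comp inr, π.comp inl, ?_, ?_, ?_⟩
  · refine hom_ext fun a => ?_
    change π.f (inr.f (f.f a)) = π.f (inl.f (ι.f a))
    have h := app_eq hπ.1 a
    change π.f (δ.f a) = 0 at h
    have : inl.f (ι.f a) = δ.f a + inr.f (f.f a) := by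
      refine Prod.ext ?_ ?_
      · exact (add_zero (ι.f a)).symm
      · exact (neg_add_cancel (f.f a)).symm
    rw [this, map_add, h, zero_add]
  · rw [isKernelMor_iff]
    refine ⟨?_, hv⟩
    rw [injective_iff_map_eq_zero]
    intro c hc
    apply eq_zero_of_v
    rw [← hv]
    change P.v ((π.comp inr).f c) = ⊤
    rw [hc, P.v_zero]
  · intro D u w huw
    let ρ : ValHom (prod B C) D := ⟨w.f.coprod u.f, fun x =>
      (min_le_min (w.le x.1) (u.le x.2)).trans (D.add_le _ _)⟩
    have hρ : ρ.comp δ = 0 := by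
      refine hom_ext fun a => ?_
      change w.f (ι.f a) + u.f (-f.f a) = 0
      have := app_eq huw a
      rw [comp_apply, comp_apply] at this
      rw [← this, map_neg, add_neg_cancel]
    obtain ⟨t, ht, huniq⟩ := hπ.2 D ρ hρ
    refine ⟨t, ⟨hom_ext fun c => ?_, hom_ext fun b => ?_⟩, ?_⟩
    · refine (app_eq ht (inr.f c)).trans ?_
      change w.f 0 + u.f c = u.f c
      rw [map_zero, zero_add]
    · refine (app_eq ht (inl.f b)).trans ?_
      change w.f b + u.f 0 = w.f b
      rw [map_zero, add_zero]
    · rintro t' ⟨h1, h2⟩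
      apply huniq
      refine hom_ext fun x => ?_
      have e : x = inl.f x.1 + inr.f x.2 :=
        Prod.ext (add_zero x.1).symm (zero_add x.2).symm
      change t'.f (π.f x) = w.f x.1 + u.f x.2
      rw [← app_eq h1, ← app_eq h2]
      change _ = t'.f (π.f (inl.f x.1)) + t'.f (π.f (inr.f x.2))
      rw [← map_add, ← map_add, ← e]

theorem pullback (A B C : ValGroup p n) (π : ValHom B A)
    (hπ : IsCokernelMor π) (f : ValHom C A) :
    ∃ (P : ValGroup p n) (π' : ValHom P C) (f' : ValHom P B),
      f.comp π' = π.comp f' ∧ IsCokernelMor π' ∧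
      (∀ (D : ValGroup p n) (u : ValHom D C) (w : ValHom D B), f.comp u = π.comp w →
        ∃! t : ValHom D P, π'.comp t = u ∧ f'.comp t = w) := by
  rw [isCokernelMor_iff] at hπ
  let N : AddSubgroup (prod C B).B :=
    { carrier := {x | f.f x.1 = π.f x.2}
      zero_mem' := by
        change f.f 0 = π.f 0
        rw [map_zero, map_zero]
      add_mem' := by
        intro x y hx hy
        change f.f (x.1 + y.1) = π.f (x.2 + y.2)
        rw [map_add, map_add, hx, hy]
      neg_mem' := by
        intro x hx
        change f.f (-x.1) = π.f (-x.2)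
        rw [map_neg, map_neg, hx] }
  let P := sub (prod C B) N
  let fst : ValHom (prod C B) C := ⟨AddMonoidHom.fst C.B B.B, fun x => min_le_left _ _⟩
  let snd : ValHom (prod C B) B := ⟨AddMonoidHom.snd C.B B.B, fun x => min_le_right _ _⟩
  let i : ValHom P (prod C B) := subMap _ N
  refine ⟨P, fst.comp i, snd.comp i, hom_ext fun x => x.2, ?_, ?_⟩
  · rw [isCokernelMor_iff]
    intro c
    obtain ⟨b, hb, hv⟩ := hπ (f.f c)
    refine ⟨⟨(c, b), hb.symm⟩, rfl, ?_⟩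
    change min (C.v c) (B.v b) = C.v c
    rw [hv]
    exact min_eq_left (f.le c)
  · intro D u w huw
    refine ⟨⟨(u.f.prod w.f).codRestrict N (fun d => app_eq huw d), fun d =>
      le_min (u.le d) (w.le d)⟩, ⟨hom_ext fun d => rfl, hom_ext fun d => rfl⟩, ?_⟩
    rintro t ⟨h1, h2⟩
    refine hom_ext fun d => ?_
    apply Subtype.val_injective
    exact Prod.ext (app_eq h1 d) (app_eq h2 d)

end Helpers

end PVal

open PVal in
/-- The category `𝒱ₚⁿ` of `p`-valuated abelian groups with valuation
bounded by `n-1` is quasi-abelian: it has kernels and cokernels, and the kernel–cokernel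
pairs form an exact structure (identities are inflations/deflations, these classes are
closed under composition, pushouts of inflations along arbitrary morphisms exist and are
inflations, and dually for deflations).  Moreover the stated characterizations of kernels,
cokernels and kernel–cokernel pairs hold. -/
theorem vpn_quasiAbelian (p n : ℕ) (hp : p.Prime) (hn : 1 ≤ n) :
    -- kernels exist
    (∀ (A B : ValGroup p n) (φ : ValHom A B),
      ∃ (K : ValGroup p n) (ι : ValHom K A), IsKernelOf ι φ) ∧
    -- cokernels exist
    (∀ (A B : ValGroup p n) (φ : ValHom A B),
      ∃ (Q : ValGroup p n) (π : ValHom B Q), IsCokernelOf π φ) ∧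
    -- identities are inflations and deflations
    (∀ A : ValGroup p n, IsKernelMor (ValHom.id A) ∧ IsCokernelMor (ValHom.id A)) ∧
    -- inflations and deflations are closed under composition
    (∀ (A B C : ValGroup p n) (φ : ValHom A B) (ψ : ValHom B C),
      IsKernelMor φ → IsKernelMor ψ → IsKernelMor (ψ.comp φ)) ∧
    (∀ (A B C : ValGroup p n) (φ : ValHom A B) (ψ : ValHom B C),
      IsCokernelMor φ → IsCokernelMor ψ → IsCokernelMor (ψ.comp φ)) ∧
    -- pushouts of inflations along arbitrary morphisms exist and are inflations
    (∀ (A B C : ValGroup p n) (ι : ValHom A B), IsKernelMor ι → ∀ f : ValHom A C,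
      ∃ (P : ValGroup p n) (ι' : ValHom C P) (f' : ValHom B P),
        ι'.comp f = f'.comp ι ∧ IsKernelMor ι' ∧
        (∀ (D : ValGroup p n) (u : ValHom C D) (w : ValHom B D), u.comp f = w.comp ι →
          ∃! t : ValHom P D, t.comp ι' = u ∧ t.comp f' = w)) ∧
    -- pullbacks of deflations along arbitrary morphisms exist and are deflations
    (∀ (A B C : ValGroup p n) (π : ValHom B A), IsCokernelMor π → ∀ f : ValHom C A,
      ∃ (P : ValGroup p n) (π' : ValHom P C) (f' : ValHom P B),
        f.comp π' = π.comp f' ∧ IsCokernelMor π' ∧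
        (∀ (D : ValGroup p n) (u : ValHom D C) (w : ValHom D B), f.comp u = π.comp w →
          ∃! t : ValHom D P, π'.comp t = u ∧ f'.comp t = w)) ∧
    -- (1) characterization of kernels
    (∀ (A B : ValGroup p n) (φ : ValHom A B),
      (IsKernelMor φ ↔ (Function.Injective φ.f ∧ ∀ x, B.v (φ.f x) = A.v x)) ∧
      (IsKernelMor φ ↔ (Function.Injective φ.f ∧
        ∀ i : ℕ, i ≤ n → ∀ x, (i : ℕ∞) ≤ B.v (φ.f x) → (i : ℕ∞) ≤ A.v x))) ∧
    -- (2) characterization of cokernels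
    (∀ (A B : ValGroup p n) (φ : ValHom A B),
      (IsCokernelMor φ ↔ (Function.Surjective φ.f ∧
        ∀ y, ∃ x, φ.f x = y ∧ A.v x = B.v y)) ∧
      (IsCokernelMor φ ↔
        ∀ i : ℕ, i ≤ n → ∀ y, (i : ℕ∞) ≤ B.v y →
          ∃ x, φ.f x = y ∧ (i : ℕ∞) ≤ A.v x)) ∧
    -- (3) characterization of kernel–cokernel pairs
    (∀ (A B C : ValGroup p n) (φ : ValHom A B) (ψ : ValHom B C),
      IsConflation φ ψ ↔
        ∀ i : ℕ, i ≤ n →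
          (∀ x : A.B, (i : ℕ∞) ≤ A.v x → φ.f x = 0 → x = 0) ∧
          (∀ x : A.B, (i : ℕ∞) ≤ A.v x → ψ.f (φ.f x) = 0) ∧
          (∀ y : B.B, (i : ℕ∞) ≤ B.v y → ψ.f y = 0 →
            ∃ x : A.B, (i : ℕ∞) ≤ A.v x ∧ φ.f x = y) ∧
          (∀ z : C.B, (i : ℕ∞) ≤ C.v z →
            ∃ y : B.B, (i : ℕ∞) ≤ B.v y ∧ ψ.f y = z)) := by
  refine ⟨fun A B φ => ⟨_, _, subMap_isKernelOf φ⟩, fun A B φ => ⟨_, _, quotMap_isCokernelOf φ⟩,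
    fun A => ⟨?_, ?_⟩, ?_, ?_, fun A B C ι hι f => pushout hp hn A B C ι hι f,
    fun A B C π hπ f => pullback A B C π hπ f, fun A B φ => ⟨isKernelMor_iff φ, ?_⟩,
    fun A B φ => ⟨?_, ?_⟩, ?_⟩
  · exact (isKernelMor_iff _).2 ⟨fun _ _ h => h, fun _ => rfl⟩
  · exact (isCokernelMor_iff _).2 fun y => ⟨y, rfl, rfl⟩
  · intro A B C φ ψ h1 h2
    rw [isKernelMor_iff] at *
    exact ⟨h2.1.comp h1.1, fun x => (h2.2 _).trans (h1.2 x)⟩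
  · intro A B C φ ψ h1 h2
    rw [isCokernelMor_iff] at *
    intro z
    obtain ⟨y, hy, hv⟩ := h2 z
    obtain ⟨x, hx, hv'⟩ := h1 y
    exact ⟨x, by rw [comp_apply, hx, hy], hv'.trans hv⟩
  · rw [isKernelMor_iff]
    refine and_congr_right fun _ => ⟨fun h i _ x hx => h x ▸ hx, fun h x => ?_⟩
    exact le_antisymm (v_le_of hn x _ fun i hi => h i hi x) (φ.le x)
  · rw [isCokernelMor_iff]
    exact ⟨fun h => ⟨fun y => ⟨_, (h y).choose_spec.1⟩, h⟩, fun h => h.2⟩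
  · rw [isCokernelMor_iff, lift_iff]
  · intro A B C φ ψ
    rw [IsConflation, isKernelOf_iff, isCokernelOf_iff]
    constructor
    · rintro ⟨⟨⟨hi, hv⟩, hk⟩, hs, -⟩ i _
      refine ⟨fun x _ hx => hi (by rw [hx, map_zero]), fun x _ => (hk _).2 ⟨x, rfl⟩, ?_, ?_⟩
      · intro y hy h0
        obtain ⟨x, rfl⟩ := (hk y).1 h0
        exact ⟨x, hv x ▸ hy, rfl⟩
      · intro z hz
        obtain ⟨y, hy, hv'⟩ := hs z
        exact ⟨y, hv' ▸ hz, hy⟩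
    · intro h
      have h0 := h 0 (Nat.zero_le _)
      simp only [Nat.cast_zero, zero_le, forall_const, true_and] at h0
      obtain ⟨h1, h2, h3, h4⟩ := h0
      have hi : Function.Injective φ.f := (injective_iff_map_eq_zero φ.f).2 h1
      have hk : ∀ y, ψ.f y = 0 ↔ ∃ x, φ.f x = y :=
        fun y => ⟨h3 y, fun ⟨x, hx⟩ => hx ▸ h2 x⟩
      refine ⟨⟨⟨hi, fun x => le_antisymm (v_le_of hn x _ fun i hin hx => ?_) (φ.le x)⟩, hk⟩,
        (lift_iff ψ).2 fun i hin z hz => ?_, hk⟩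
      · obtain ⟨x', hx', he⟩ := (h i hin).2.2.1 _ hx (h2 x)
        exact hi he ▸ hx'
      · obtain ⟨y, hy, he⟩ := (h i hin).2.2.2 z hz
        exact ⟨y, he, hy⟩
end
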